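/- Let G be a (P_3 + P_1)-free graph. Then tree-α(G) ≤ max{ibn(G), 2}. -/

import Mathlib

open SimpleGraph
/-- The independence number of the subgraph of `G` induced by `s`:
the supremum of sizes of independent sets contained in `s`. -/
noncomputable def setIndepNum {V : Type*} (G : SimpleGraph V) (s : Set V) : ℕ :=
  sSup {n | ∃ t : Finset V, ↑t ⊆ s ∧ (∀ u ∈ t, ∀ v ∈ t, u ≠ v → ¬ G.Adj u v) ∧ t.card = n}

/-- A tree decomposition of a graph `G`. -/
structure TreeDecomp {V : Type*} (G : SimpleGraph V) where
  ι : Type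
  T : SimpleGraph ι
  tree : T.IsTree
  bag : ι → Set V
  bag_vert : ∀ v : V, ∃ i, v ∈ bag i
  bag_edge : ∀ u v : V, G.Adj u v → ∃ i, u ∈ bag i ∧ v ∈ bag i
  bag_conn : ∀ v : V, (T.induce {i | v ∈ bag i}).Connected

/-- The tree-independence number of `G`: the least `n` such that `G` has a tree
decomposition all of whose bags induce subgraphs with independence number at most `n`. -/
noncomputable def treeIndepNum {V : Type*} (G : SimpleGraph V) : ℕ :=
  sInf {n | ∃ D : TreeDecomp G, ∀ i, setIndepNum G (D.bag i) ≤ n}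

/-- `G` is `H`-free: no induced subgraph of `G` is isomorphic to `H`. -/
def IndFree {W V : Type*} (H : SimpleGraph W) (G : SimpleGraph V) : Prop :=
  IsEmpty (H ↪g G)

/-- The induced biclique number of `G`: the largest `s` such that `G` contains an induced
subgraph isomorphic to `K_{s,s}`. -/
noncomputable def ibn {V : Type*} (G : SimpleGraph V) : ℕ :=
  sSup {s | Nonempty (completeBipartiteGraph (Fin s) (Fin s) ↪g G)}

/-- `P_3 + P_1`: the disjoint union of a path on three vertices and an isolated vertex. -/
def P3plusP1 : SimpleGraph (Fin 3 ⊕ Fin 1) := pathGraph 3 ⊕g (⊥ : SimpleGraph (Fin 1))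

/-!
If every independent set has at most `max (ibn G) 2` vertices, a single bag suffices. Otherwise
extend a larger independent set to a maximal one, `I`. An induced `P₃` dominates a
`(P₃ + P₁)`-free graph, so a vertex with two neighbors in `I` is complete to `I`. Hence each vertex
lies in exactly one of the closed neighborhoods `N[i]`, `i ∈ I`, or in all of them, and these sets
are the bags of a tree decomposition over any tree on `I`. An independent set inside `N[i]` with at
least two vertices is complete to `I`, and `I` has more than `ibn G` vertices, so the independent
set has at most `ibn G`.
-/

/-- The closed neighborhood `N[v]`: the bags of the tree decomposition in the main argument are the
closed neighborhoods of the vertices of a maximal independent set. -/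
def closedNeighborSet {V : Type*} (G : SimpleGraph V) (v : V) : Set V :=
  insert v (G.neighborSet v)

section

variable {V : Type*} {G : SimpleGraph V} {I : Set V} {a b c i j k u v : V}

theorem mem_closedNeighborSet : u ∈ closedNeighborSet G v ↔ u = v ∨ G.Adj v u :=
  Iff.rfl

theorem mem_closedNeighborSet_self (G : SimpleGraph V) (v : V) : v ∈ closedNeighborSet G v :=
  Set.mem_insert _ _

theorem mem_closedNeighborSet_of_adj (h : G.Adj v u) : u ∈ closedNeighborSet G v :=
  mem_closedNeighborSet.2 (.inr h)

theorem not_adj_of_isIndepSet (hI : G.IsIndepSet I) (hu : u ∈ I) (hv : v ∈ I) : ¬ G.Adj u v :=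
  fun huv => hI hu hv huv.ne huv

theorem exists_maximal_isIndepSet_superset (hI : G.IsIndepSet I) :
    ∃ J, I ⊆ J ∧ Maximal G.IsIndepSet J :=
  zorn_subset_nonempty {J | G.IsIndepSet J}
    (fun C hC hchain _ => ⟨⋃₀ C, (Set.pairwise_sUnion hchain.directedOn).2 hC,
      fun _ => Set.subset_sUnion_of_mem⟩) I hI

theorem exists_mem_closedNeighborSet_of_maximal (hI : Maximal G.IsIndepSet I) (v : V) :
    ∃ i ∈ I, v ∈ closedNeighborSet G i := by
  by_contra! h
  have hins : G.IsIndepSet (insert v I) :=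
    hI.prop.insert fun i hi _ =>
      ⟨fun hvi => h i hi (mem_closedNeighborSet_of_adj hvi.symm),
        fun hiv => h i hi (mem_closedNeighborSet_of_adj hiv)⟩
  exact h v (hI.mem_of_prop_insert hins) (mem_closedNeighborSet_self G v)

theorem exists_mem_ne_ne_of_two_lt_encard {α : Type*} {s : Set α} (hs : 2 < s.encard) (a b : α) :
    ∃ c ∈ s, c ≠ a ∧ c ≠ b := by
  by_contra! h
  have hsub : s ⊆ {a, b} := fun c hc => or_iff_not_imp_left.2 (h c hc)
  refine hs.not_ge ?_
  calc
    s.encard ≤ ({a, b} : Set α).encard := Set.encard_le_encard hsub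
    _ ≤ ({b} : Set α).encard + 1 := Set.encard_insert_le {b} a
    _ = 2 := by rw [Set.encard_singleton, one_add_one_eq_two]

namespace IndFree

theorem adj_or_adj_or_adj_of_path (hfree : IndFree P3plusP1 G) (hab : G.Adj a b) (hbc : G.Adj b c)
    (hac : ¬ G.Adj a c) (hne : a ≠ c) (v : V) : G.Adj a v ∨ G.Adj b v ∨ G.Adj c v := by
  by_contra! hv
  obtain ⟨hav, hbv, hcv⟩ := hv
  have hav_ne : a ≠ v := fun h => hbv (h ▸ hab.symm)
  have hbv_ne : b ≠ v := fun h => hav (h ▸ hab)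
  have hcv_ne : c ≠ v := fun h => hbv (h ▸ hbc)
  refine hfree.false ⟨⟨Sum.elim ![a, b, c] ![v], ?_⟩, fun {x y} => ?_⟩
  · refine Function.Injective.sumElim ?_ (Function.injective_of_subsingleton _) ?_
    · simp only [Matrix.vecCons, Fin.cons_injective_iff]
      simp [hab.ne, hbc.ne, hne, Function.injective_of_subsingleton]
    · simp [Fin.forall_fin_succ, hav_ne, hbv_ne, hcv_ne]
  · change G.Adj (Sum.elim ![a, b, c] ![v] x) (Sum.elim ![a, b, c] ![v] y) ↔ _
    rcases x with x | x <;> rcases y with y | y <;> fin_cases x <;> fin_cases y <;>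
      simp [P3plusP1, pathGraph_adj, hab, hbc, hac, hav, hbv, hcv, G.adj_comm b a, G.adj_comm c,
        G.adj_comm v]

theorem adj_of_mem_closedNeighborSet_of_ne (hfree : IndFree P3plusP1 G) (hI : G.IsIndepSet I)
    (hi : i ∈ I) (hj : j ∈ I) (hij : i ≠ j) (hvi : v ∈ closedNeighborSet G i)
    (hvj : v ∈ closedNeighborSet G j) (hk : k ∈ I) : G.Adj k v := by
  have hnot : ∀ {x y}, x ∈ I → y ∈ I → ¬ G.Adj x y := not_adj_of_isIndepSet hI
  obtain rfl | hiv := mem_closedNeighborSet.1 hvi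
  · exact ((mem_closedNeighborSet.1 hvj).elim hij (hnot hj hi)).elim
  obtain rfl | hjv := mem_closedNeighborSet.1 hvj
  · exact (hnot hi hj hiv).elim
  obtain hik | hvk | hjk := hfree.adj_or_adj_or_adj_of_path hiv hjv.symm (hnot hi hj) hij k
  · exact (hnot hi hk hik).elim
  · exact hvk.symm
  · exact (hnot hj hk hjk).elim

theorem forall_mem_or_existsUnique_mem_closedNeighborSet (hfree : IndFree P3plusP1 G)
    (hI : Maximal G.IsIndepSet I) (v : V) :
    (∀ i : I, v ∈ closedNeighborSet G i) ∨ ∃! i : I, v ∈ closedNeighborSet G i := by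
  obtain ⟨i, hi, hvi⟩ := exists_mem_closedNeighborSet_of_maximal hI v
  by_cases huniq : ∀ j : I, v ∈ closedNeighborSet G j → j = ⟨i, hi⟩
  · exact .inr ⟨⟨i, hi⟩, hvi, huniq⟩
  · push Not at huniq
    obtain ⟨j, hvj, hji⟩ := huniq
    have hne : (j : V) ≠ i := fun h => hji (Subtype.ext h)
    exact .inl fun k => mem_closedNeighborSet_of_adj <|
      hfree.adj_of_mem_closedNeighborSet_of_ne hI.prop j.2 hi hne hvj hvi k.2

theorem exists_mem_closedNeighborSet_of_adj (hfree : IndFree P3plusP1 G)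
    (hI : Maximal G.IsIndepSet I) (hcard : 2 < I.encard) (huv : G.Adj u v) :
    ∃ i ∈ I, u ∈ closedNeighborSet G i ∧ v ∈ closedNeighborSet G i := by
  obtain ⟨i, hi, hui⟩ := exists_mem_closedNeighborSet_of_maximal hI u
  obtain ⟨j, hj, hvj⟩ := exists_mem_closedNeighborSet_of_maximal hI v
  by_contra! h
  obtain ⟨k, hk, hki, hkj⟩ := exists_mem_ne_ne_of_two_lt_encard hcard i j
  have huk : ¬ G.Adj u k := fun huk =>
    have hju : G.Adj j u := hfree.adj_of_mem_closedNeighborSet_of_ne hI.prop hk hi hki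
      (mem_closedNeighborSet_of_adj huk.symm) hui hj
    h j hj (mem_closedNeighborSet_of_adj hju) hvj
  have hvk : ¬ G.Adj v k := fun hvk =>
    have hiv : G.Adj i v := hfree.adj_of_mem_closedNeighborSet_of_ne hI.prop hk hj hkj
      (mem_closedNeighborSet_of_adj hvk.symm) hvj hi
    h i hi hui (mem_closedNeighborSet_of_adj hiv)
  have hvi : v ≠ i ∧ ¬ G.Adj i v := by
    simpa only [mem_closedNeighborSet, not_or] using h i hi hui
  have hiu : G.Adj i u :=
    (mem_closedNeighborSet.1 hui).resolve_left fun hui => hvi.2 (hui ▸ huv)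
  obtain hik | huk' | hvk' := hfree.adj_or_adj_or_adj_of_path hiu huv hvi.2 hvi.1.symm k
  · exact not_adj_of_isIndepSet hI.prop hi hk hik
  · exact huk huk'
  · exact hvk hvk'

theorem forall_adj_of_mem_closedNeighborSet_of_not_adj (hfree : IndFree P3plusP1 G)
    (hI : G.IsIndepSet I) (hcard : 2 < I.encard) (hi : i ∈ I) (ha : a ∈ closedNeighborSet G i)
    (hb : b ∈ closedNeighborSet G i) (hab : a ≠ b) (hnadj : ¬ G.Adj a b) :
    ∀ k ∈ I, G.Adj k a := by
  have hia : G.Adj i a := (mem_closedNeighborSet.1 ha).resolve_left fun h =>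
    hnadj (h ▸ (mem_closedNeighborSet.1 hb).resolve_left (h ▸ hab.symm))
  have hib : G.Adj i b := (mem_closedNeighborSet.1 hb).resolve_left fun h => hnadj (h ▸ hia.symm)
  by_contra! h
  obtain ⟨k, hk, hka⟩ := h
  have haj : ∀ j ∈ I, j ≠ i → ¬ G.Adj j a := fun j hj hji hja =>
    hka <| hfree.adj_of_mem_closedNeighborSet_of_ne hI hj hi hji
      (mem_closedNeighborSet_of_adj hja) ha hk
  have hbj : ∀ j ∈ I, j ≠ i → G.Adj b j := fun j hj hji => by
    obtain haj' | hij | hbj := hfree.adj_or_adj_or_adj_of_path hia.symm hib hnadj hab j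
    · exact (haj j hj hji haj'.symm).elim
    · exact (not_adj_of_isIndepSet hI hi hj hij).elim
    · exact hbj
  obtain ⟨j, hj, hji⟩ := Set.exists_ne_of_one_lt_encard (lt_trans (by norm_num) hcard) i
  obtain ⟨l, hl, hli, hlj⟩ := exists_mem_ne_ne_of_two_lt_encard hcard i j
  obtain hja | hba | hla := hfree.adj_or_adj_or_adj_of_path (hbj j hj hji).symm (hbj l hl hli)
    (not_adj_of_isIndepSet hI hj hl) hlj.symm a
  · exact haj j hj hji hja
  · exact hnadj hba.symm
  · exact haj l hl hli hla

theorem card_le_one_or_forall_adj_of_subset_closedNeighborSet (hfree : IndFree P3plusP1 G)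
    (hI : G.IsIndepSet I) (hcard : 2 < I.encard) (hi : i ∈ I) {t : Finset V}
    (ht : G.IsIndepSet t) (hti : ↑t ⊆ closedNeighborSet G i) :
    t.card ≤ 1 ∨ ∀ k ∈ I, ∀ v ∈ t, G.Adj k v := by
  rw [or_iff_not_imp_left, not_le]
  intro hcard_t k hk v hv
  obtain ⟨w, hw, hwv⟩ := Finset.exists_mem_ne hcard_t v
  exact hfree.forall_adj_of_mem_closedNeighborSet_of_not_adj hI hcard hi (hti hv) (hti hw)
    hwv.symm (not_adj_of_isIndepSet ht hv hw) k hk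

end IndFree

namespace TreeDecomp

theorem exists_range_bag_eq_of_forall_or_existsUnique {ι : Type*} [Small.{0} ι] [Nonempty ι]
    (bag : ι → Set V) (hvert : ∀ v, (∀ i, v ∈ bag i) ∨ ∃! i, v ∈ bag i)
    (hedge : ∀ u v, G.Adj u v → ∃ i, u ∈ bag i ∧ v ∈ bag i) :
    ∃ D : TreeDecomp G, Set.range D.bag = Set.range bag := by
  let e := (equivShrink ι).symm
  have hvert' (v : V) : (∀ x, v ∈ bag (e x)) ∨ ∃! x, v ∈ bag (e x) :=
    (hvert v).imp (fun h x => h (e x)) e.existsUnique_congr_right.2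
  have : Nonempty (Shrink.{0} ι) := e.nonempty
  obtain ⟨T, -, hT⟩ := (connected_top (V := Shrink.{0} ι)).exists_isTree_le
  refine ⟨⟨Shrink ι, T, hT, bag ∘ e, fun v => ?_, fun u v huv => ?_, fun v => ?_⟩,
    e.surjective.range_comp bag⟩
  · exact (hvert' v).elim (fun h => ⟨Classical.arbitrary _, h _⟩) ExistsUnique.exists
  · exact e.exists_congr_right.2 (hedge u v huv)
  · obtain hall | ⟨x, hx, huniq⟩ := hvert' v
    · have huniv : {x | v ∈ (bag ∘ e) x} = Set.univ := Set.eq_univ_of_forall hall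
      rw [huniv]
      exact (induceUnivIso T).connected_iff.2 hT.connected
    · have hsingleton : {x | v ∈ (bag ∘ e) x} = {x} :=
        Set.eq_singleton_iff_unique_mem.2 ⟨hx, huniq⟩
      rw [hsingleton]
      exact .of_subsingleton

theorem nonempty (G : SimpleGraph V) : Nonempty (TreeDecomp G) :=
  have ⟨D, _⟩ := exists_range_bag_eq_of_forall_or_existsUnique (G := G) (ι := Unit)
    (fun _ => Set.univ) (fun _ => .inl fun _ => trivial) fun _ _ _ => ⟨(), trivial, trivial⟩
  ⟨D⟩

end TreeDecomp

theorem IndFree.exists_treeDecomp_range_bag_eq [Small.{0} I] (hfree : IndFree P3plusP1 G)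
    (hI : Maximal G.IsIndepSet I) (hcard : 2 < I.encard) :
    ∃ D : TreeDecomp G, Set.range D.bag = closedNeighborSet G '' I := by
  have : Nonempty I := (Set.encard_pos.1 (zero_lt_two.trans hcard)).to_subtype
  rw [Set.image_eq_range]
  exact TreeDecomp.exists_range_bag_eq_of_forall_or_existsUnique _
    (hfree.forall_mem_or_existsUnique_mem_closedNeighborSet hI) fun u v huv =>
      have ⟨i, hi, h⟩ := hfree.exists_mem_closedNeighborSet_of_adj hI hcard huv
      ⟨⟨i, hi⟩, h⟩

theorem treeIndepNum_le_of_forall_card_le {n : ℕ} (D : TreeDecomp G)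
    (hD : ∀ x, ∀ t : Finset V, ↑t ⊆ D.bag x → G.IsIndepSet t → t.card ≤ n) :
    treeIndepNum G ≤ n := by
  refine Nat.sInf_le ⟨D, fun x => csSup_le' ?_⟩
  rintro _ ⟨t, htx, ht, rfl⟩
  exact hD x t htx fun u hu v hv => ht u hu v hv

theorem nonempty_completeBipartiteGraph_embedding {α β : Type*} (e : α ↪ V) (f : β ↪ V)
    (he : ∀ x y, ¬ G.Adj (e x) (e y)) (hf : ∀ x y, ¬ G.Adj (f x) (f y))
    (hef : ∀ x y, G.Adj (e x) (f y)) : Nonempty (completeBipartiteGraph α β ↪g G) := by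
  refine ⟨⟨⟨Sum.elim e f, e.injective.sumElim f.injective fun x y => (hef x y).ne⟩, ?_⟩⟩
  rintro (x | x) (y | y) <;> simp [he, hf, hef, (hef _ _).symm]

theorem min_card_le_ibn
    (hbdd : BddAbove {n | Nonempty (completeBipartiteGraph (Fin n) (Fin n) ↪g G)})
    {s t : Finset V} (hs : G.IsIndepSet s) (ht : G.IsIndepSet t)
    (hst : ∀ u ∈ s, ∀ v ∈ t, G.Adj u v) : min s.card t.card ≤ ibn G := by
  have exists_embedding (r : Finset V) (hr : min s.card t.card ≤ r.card) :
      Nonempty (Fin (min s.card t.card) ↪ r) :=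
    Function.Embedding.nonempty_of_card_le (by simpa only [Fintype.card_fin, Fintype.card_coe])
  obtain ⟨e⟩ := exists_embedding s (min_le_left _ _)
  obtain ⟨f⟩ := exists_embedding t (min_le_right _ _)
  exact le_csSup hbdd <| nonempty_completeBipartiteGraph_embedding (e.trans (.subtype _))
    (f.trans (.subtype _)) (fun x y => not_adj_of_isIndepSet hs (e x).2 (e y).2)
    (fun x y => not_adj_of_isIndepSet ht (f x).2 (f y).2)
    fun x y => hst _ (e x).2 _ (f y).2

theorem bddAbove_setOf_completeBipartiteGraph_embedding [Finite V] (G : SimpleGraph V) :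
    BddAbove {n | Nonempty (completeBipartiteGraph (Fin n) (Fin n) ↪g G)} := by
  refine ⟨Nat.card V, ?_⟩
  rintro n ⟨f⟩
  simpa only [Nat.card_fin] using
    Nat.card_le_card_of_injective (f ∘ Sum.inl) (f.injective.comp Sum.inl_injective)

/-- Stated with independent sets rather than with `treeIndepNum`, because on an infinite graph
`setIndepNum` is `0` on sets that contain arbitrarily large independent sets. -/
theorem stmt_13_general [Small.{0} V] (hfree : IndFree P3plusP1 G)
    (hbdd : BddAbove {n | Nonempty (completeBipartiteGraph (Fin n) (Fin n) ↪g G)}) :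
    ∃ D : TreeDecomp G, ∀ x, ∀ t : Finset V, ↑t ⊆ D.bag x → G.IsIndepSet t →
      t.card ≤ max (ibn G) 2 := by
  by_cases hsmall : ∀ t : Finset V, G.IsIndepSet t → t.card ≤ max (ibn G) 2
  · obtain ⟨D⟩ := TreeDecomp.nonempty G
    exact ⟨D, fun _ t _ ht => hsmall t ht⟩
  push Not at hsmall
  obtain ⟨s, hs, hs_card⟩ := hsmall
  obtain ⟨I, hsI, hI⟩ := exists_maximal_isIndepSet_superset hs
  have hI_card : 2 < I.encard := calc
    (2 : ℕ∞) < s.card := mod_cast (le_max_right _ _).trans_lt hs_card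
    _ = (s : Set V).encard := (Set.encard_coe_eq_coe_finsetCard s).symm
    _ ≤ I.encard := Set.encard_le_encard hsI
  obtain ⟨D, hD⟩ := hfree.exists_treeDecomp_range_bag_eq hI hI_card
  refine ⟨D, fun x t htx ht => ?_⟩
  obtain ⟨i, hi, hix⟩ : D.bag x ∈ closedNeighborSet G '' I := hD ▸ Set.mem_range_self x
  obtain ht_card | hcomplete := hfree.card_le_one_or_forall_adj_of_subset_closedNeighborSet
    hI.prop hI_card hi ht (hix ▸ htx)
  · lia
  · have hmin : min s.card t.card ≤ ibn G :=
      min_card_le_ibn hbdd hs ht fun u hu => hcomplete u (hsI hu)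
    lia

end

/-- Let `G` be a `(P_3 + P_1)`-free graph. Then
`tree-α(G) ≤ max {ibn(G), 2}`. -/
theorem stmt_13 {V : Type} [Finite V] (G : SimpleGraph V) (hfree : IndFree P3plusP1 G) :
    treeIndepNum G ≤ max (ibn G) 2 := by
  obtain ⟨D, hD⟩ := stmt_13_general hfree (bddAbove_setOf_completeBipartiteGraph_embedding G)
  exact treeIndepNum_le_of_forall_card_le D hD
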